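/- Let d ≥ 2 be an integer, r₀, ε > 0, and let w be continuous on the closed annulus {x ∈ ℝ^d : r₀ ≤ |x| ≤ r₀+ε}, harmonic on the open annulus {x ∈ ℝ^d : r₀ < |x| < r₀+ε}, and C¹ up to the inner sphere with ⟨∇w(x), x/|x|⟩ = 0 for every x with |x| = r₀. Then the supremum of |w| over the closed annulus equals the supremum of |w| over the outer sphere {x : |x| = r₀+ε}. -/

import Mathlib

open MeasureTheory Metric Set
open scoped InnerProductSpace

/-- The Laplacian of `f : ℝ^d → ℝ` at `x`, as the sum of the pure second
partial derivatives in the coordinate directions. -/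
noncomputable def laplacian {d : ℕ} (f : EuclideanSpace ℝ (Fin d) → ℝ)
    (x : EuclideanSpace ℝ (Fin d)) : ℝ :=
  ∑ i : Fin d,
    iteratedFDeriv ℝ 2 f x ![EuclideanSpace.single i 1, EuclideanSpace.single i 1]

/-- `f` is harmonic on the open set `U ⊆ ℝ^d`: it is `C²` there and its
Laplacian vanishes on `U`. -/
def HarmonicOnSet {d : ℕ} (f : EuclideanSpace ℝ (Fin d) → ℝ)
    (U : Set (EuclideanSpace ℝ (Fin d))) : Prop :=
  ContDiffOn ℝ 2 f U ∧ ∀ x ∈ U, laplacian f x = 0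

/-!
The perturbation `w + δ ‖x‖²` of a harmonic `w` has positive Laplacian, so it has no interior local
maximum, and the Neumann condition makes its radial derivative positive on the inner sphere, so it
has no maximum there either. Hence it is maximal on the outer sphere, and letting `δ → 0` bounds `w`
by its supremum over that sphere. The same applies to `-w`. Adding `δ ‖x‖²` takes the place of the
Hopf lemma, because only the supremum is at stake.
-/

open Filter Topology InnerProductSpace
open scoped Laplacian

lemma deriv_deriv_nonpos_of_isLocalMax {f : ℝ → ℝ} {a : ℝ} (hf : ContinuousAt f a)
    (hmax : IsLocalMax f a) : deriv (deriv f) a ≤ 0 := by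
  by_contra! hpos
  have hmin : IsLocalMin f a := isLocalMin_of_deriv_deriv_pos hpos hmax.deriv_eq_zero hf
  have hconst : f =ᶠ[𝓝 a] fun _ => f a := by
    filter_upwards [hmax, hmin] with t hle hge using le_antisymm hle hge
  have hzero : deriv (deriv f) a = 0 := by simpa using hconst.deriv.deriv_eq
  exact hpos.ne' hzero

lemma iteratedFDeriv_two_eq_deriv_deriv_line {𝕜 E F : Type*} [NontriviallyNormedField 𝕜]
    [NormedAddCommGroup E] [NormedSpace 𝕜 E] [NormedAddCommGroup F] [NormedSpace 𝕜 F]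
    {f : E → F} {x : E} (hf : ContDiffAt 𝕜 2 f x) (v : E) :
    iteratedFDeriv 𝕜 2 f x ![v, v] = deriv (deriv fun t : 𝕜 => f (x + t • v)) 0 := by
  have hline (t : 𝕜) : HasDerivAt (fun t : 𝕜 => x + t • v) v t := by
    simpa using ((hasDerivAt_id t).smul_const v).const_add x
  have hline₀ : Tendsto (fun t : 𝕜 => x + t • v) (𝓝 0) (𝓝 x) := by
    simpa using (hline 0).continuousAt.tendsto
  have hfirst : deriv (fun t : 𝕜 => f (x + t • v)) =ᶠ[𝓝 0]
      fun t => fderiv 𝕜 f (x + t • v) v := by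
    filter_upwards [hline₀.eventually (hf.eventually (by simp))] with t ht
    exact ((ht.differentiableAt two_ne_zero).hasFDerivAt.comp_hasDerivAt t (hline t)).deriv
  have hfderiv : HasFDerivAt (fderiv 𝕜 f) (fderiv 𝕜 (fderiv 𝕜 f) x) (x + (0 : 𝕜) • v) := by
    simpa using ((hf.fderiv_right (m := 1) (by norm_num)).differentiableAt one_ne_zero).hasFDerivAt
  have hsecond : HasDerivAt (fun t : 𝕜 => fderiv 𝕜 f (x + t • v))
      (fderiv 𝕜 (fderiv 𝕜 f) x v) 0 := hfderiv.comp_hasDerivAt 0 (hline 0)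
  have hsecond_apply : HasDerivAt (fun t : 𝕜 => fderiv 𝕜 f (x + t • v) v)
      (fderiv 𝕜 (fderiv 𝕜 f) x v v) 0 :=
    (hsecond.clm_apply (hasDerivAt_const 0 v)).congr_deriv (by simp)
  rw [hfirst.deriv_eq, hsecond_apply.deriv, iteratedFDeriv_two_apply]
  rfl

section Annulus

variable {E : Type*} [NormedAddCommGroup E]

lemma isCompact_closed_annulus [ProperSpace E] (r R : ℝ) :
    IsCompact {x : E | r ≤ ‖x‖ ∧ ‖x‖ ≤ R} :=
  (isCompact_closedBall 0 R).of_isClosed_subset (isClosed_Icc.preimage continuous_norm)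
    fun _ hx => mem_closedBall_zero_iff.2 hx.2

lemma isOpen_open_annulus (r R : ℝ) : IsOpen {x : E | r < ‖x‖ ∧ ‖x‖ < R} :=
  isOpen_Ioo.preimage continuous_norm

end Annulus

section NormedSpace

variable {E : Type*} [NormedAddCommGroup E] [NormedSpace ℝ E] {x v : E}

lemma iteratedFDeriv_two_nonpos_of_isLocalMax {f : E → ℝ} (hf : ContDiffAt ℝ 2 f x)
    (hmax : IsLocalMax f x) (v : E) : iteratedFDeriv ℝ 2 f x ![v, v] ≤ 0 := by
  have hline : ContinuousAt (fun t : ℝ => x + t • v) 0 := by fun_prop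
  have hx : x + (0 : ℝ) • v = x := by simp
  rw [iteratedFDeriv_two_eq_deriv_deriv_line hf]
  apply deriv_deriv_nonpos_of_isLocalMax
  · exact hf.continuousAt.comp_of_eq hline hx
  · exact IsLocalMax.comp_continuous (g := fun t : ℝ => x + t • v) (hx.symm ▸ hmax) hline

lemma hasLineDerivWithinAt_nonpos_of_isLocalMaxOn {f : E → ℝ} {f' : ℝ} {s : Set E}
    (hmax : IsLocalMaxOn f s x) (hf : HasLineDerivWithinAt ℝ f f' s x v)
    (hv : ∃ᶠ t in 𝓝[>] (0 : ℝ), x + t • v ∈ s) : f' ≤ 0 := by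
  set line : ℝ → E := fun t => x + t • v
  have hline₀ : line 0 = x := by simp [line]
  have hline : Tendsto line (𝓝[line ⁻¹' s] 0) (𝓝[s] x) := by
    have hcont : Continuous line := by fun_prop
    simpa only [hline₀] using
      hcont.continuousWithinAt.tendsto_nhdsWithin (mapsTo_preimage line s) (x := 0)
  have hmax_line : IsLocalMaxOn (f ∘ line) (line ⁻¹' s) 0 :=
    IsMaxFilter.comp_tendsto (hline₀.symm ▸ hmax) hline
  simpa using hmax_line.hasFDerivWithinAt_nonpos hf.hasFDerivWithinAt
    (one_mem_posTangentConeAt_iff_frequently.2 hv)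

lemma norm_add_smul_unit (hx : x ≠ 0) {t : ℝ} (ht : 0 ≤ t) :
    ‖x + t • (‖x‖⁻¹ • x)‖ = ‖x‖ + t := by
  have hray : SameRay ℝ x (t • (‖x‖⁻¹ • x)) :=
    (SameRay.sameRay_nonneg_smul_right x (by positivity)).nonneg_smul_right ht
  have hunit : ‖‖x‖⁻¹ • x‖ = 1 := by simp [norm_smul, hx]
  rw [hray.norm_add, norm_smul, hunit, mul_one, Real.norm_of_nonneg ht]

lemma eventually_add_smul_unit_mem_annulus {r R : ℝ} (hr : 0 < r) (hrR : r < R) (hx : ‖x‖ = r) :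
    ∀ᶠ t in 𝓝[>] (0 : ℝ), x + t • (‖x‖⁻¹ • x) ∈ {y | r ≤ ‖y‖ ∧ ‖y‖ < R} := by
  filter_upwards [Ioo_mem_nhdsGT (sub_pos.2 hrR)] with t ht
  have hnorm := norm_add_smul_unit (norm_pos_iff.1 (hx ▸ hr)) ht.1.le
  constructor <;> linarith [ht.1, ht.2]

end NormedSpace

section InnerProductSpace

variable {E : Type*} [NormedAddCommGroup E] [InnerProductSpace ℝ E]

lemma hasLineDerivAt_norm_sq_unit (x : E) :
    HasLineDerivAt ℝ (fun y : E => ‖y‖ ^ 2) (2 * ‖x‖) x (‖x‖⁻¹ • x) := by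
  have hderiv := (hasStrictFDerivAt_norm_sq x).hasFDerivAt.hasLineDerivAt (‖x‖⁻¹ • x)
  refine hderiv.congr_deriv ?_
  simp only [smul_apply, innerSL_apply_apply, inner_smul_right, real_inner_self_eq_norm_sq,
    nsmul_eq_mul, Nat.cast_ofNat]
  field_simp

lemma iteratedFDeriv_two_norm_sq (x v : E) :
    iteratedFDeriv ℝ 2 (fun y : E => ‖y‖ ^ 2) x ![v, v] = 2 * ‖v‖ ^ 2 := by
  have hfderiv : HasFDerivAt (fderiv ℝ fun y : E => ‖y‖ ^ 2) (2 • innerSL ℝ (E := E)) x := by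
    rw [fderiv_norm_sq]
    exact (2 • innerSL ℝ (E := E)).hasFDerivAt
  have hinner : innerSL ℝ v v = ‖v‖ ^ 2 := real_inner_self_eq_norm_sq v
  simp [iteratedFDeriv_two_apply, hfderiv.fderiv, hinner]

variable [FiniteDimensional ℝ E]

lemma laplacian_nonpos_of_isLocalMax {f : E → ℝ} {x : E} (hf : ContDiffAt ℝ 2 f x)
    (hmax : IsLocalMax f x) : Δ f x ≤ 0 := by
  rw [laplacian_eq_iteratedFDeriv_stdOrthonormalBasis]
  exact Finset.sum_nonpos fun i _ => iteratedFDeriv_two_nonpos_of_isLocalMax hf hmax _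

lemma laplacian_norm_sq (x : E) :
    Δ (fun y : E => ‖y‖ ^ 2) x = 2 * Module.finrank ℝ E := by
  simp [laplacian_eq_iteratedFDeriv_stdOrthonormalBasis, iteratedFDeriv_two_norm_sq, mul_comm]

variable {u : E → ℝ} {r R : ℝ}

lemma laplacian_add_smul_norm_sq {x : E} (hu : ContDiffAt ℝ 2 u x) (δ : ℝ) :
    Δ (u + δ • fun y : E => ‖y‖ ^ 2) x = Δ u x + δ * (2 * Module.finrank ℝ E) := by
  have hsq : ContDiffAt ℝ 2 (fun y : E => ‖y‖ ^ 2) x := (contDiff_norm_sq ℝ).contDiffAt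
  have hδsq : ContDiffAt ℝ 2 (δ • fun y : E => ‖y‖ ^ 2) x := hsq.const_smul δ
  rw [hu.laplacian_add hδsq, laplacian_smul δ hsq, laplacian_norm_sq, smul_eq_mul]

lemma norm_eq_of_isMaxOn_of_laplacian_pos (hr : 0 < r)
    (hC2 : ContDiffOn ℝ 2 u {x | r < ‖x‖ ∧ ‖x‖ < R})
    (hlap : ∀ x ∈ {x | r < ‖x‖ ∧ ‖x‖ < R}, 0 < Δ u x)
    (hinner : ∀ x : E, ‖x‖ = r → ∃ c > 0,
      HasLineDerivWithinAt ℝ u c {y | r ≤ ‖y‖ ∧ ‖y‖ < R} x (‖x‖⁻¹ • x))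
    {z : E} (hz : z ∈ {x | r ≤ ‖x‖ ∧ ‖x‖ ≤ R})
    (hmax : IsMaxOn u {x | r ≤ ‖x‖ ∧ ‖x‖ ≤ R} z) : ‖z‖ = R := by
  by_contra hne
  have hzR : ‖z‖ < R := lt_of_le_of_ne hz.2 hne
  rcases hz.1.eq_or_lt with hzr | hrz
  · obtain ⟨c, hc, hderiv⟩ := hinner z hzr.symm
    have hmem := eventually_add_smul_unit_mem_annulus hr (hzr ▸ hzR) hzr.symm
    have hmax' : IsMaxOn u {y | r ≤ ‖y‖ ∧ ‖y‖ < R} z :=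
      hmax.on_subset fun _ hy => ⟨hy.1, hy.2.le⟩
    exact hc.not_ge
      (hasLineDerivWithinAt_nonpos_of_isLocalMaxOn hmax'.localize hderiv hmem.frequently)
  · have hnhds : {x : E | r < ‖x‖ ∧ ‖x‖ < R} ∈ 𝓝 z :=
      (isOpen_open_annulus r R).mem_nhds ⟨hrz, hzR⟩
    have hlocal : IsLocalMax u z :=
      hmax.isLocalMax (mem_of_superset hnhds fun _ hy => ⟨hy.1.le, hy.2.le⟩)
    exact (hlap z ⟨hrz, hzR⟩).not_ge
      (laplacian_nonpos_of_isLocalMax (hC2.contDiffAt hnhds) hlocal)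

lemma norm_eq_of_isMaxOn_add_smul_norm_sq {δ : ℝ} (hδ : 0 < δ) (hr : 0 < r)
    (hC2 : ContDiffOn ℝ 2 u {x | r < ‖x‖ ∧ ‖x‖ < R})
    (hlap : ∀ x ∈ {x | r < ‖x‖ ∧ ‖x‖ < R}, 0 ≤ Δ u x)
    (hinner : ∀ x : E, ‖x‖ = r → ∃ c ≥ 0,
      HasLineDerivWithinAt ℝ u c {y | r ≤ ‖y‖ ∧ ‖y‖ < R} x (‖x‖⁻¹ • x))
    {z : E} (hz : z ∈ {x | r ≤ ‖x‖ ∧ ‖x‖ ≤ R})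
    (hmax : IsMaxOn (u + δ • fun y : E => ‖y‖ ^ 2) {x | r ≤ ‖x‖ ∧ ‖x‖ ≤ R} z) : ‖z‖ = R := by
  have : Nontrivial E := ⟨z, 0, norm_pos_iff.1 (hr.trans_le hz.1)⟩
  have hdim : (0 : ℝ) < Module.finrank ℝ E := Nat.cast_pos.2 Module.finrank_pos
  refine norm_eq_of_isMaxOn_of_laplacian_pos hr ?_ (fun x hx => ?_) (fun x hx => ?_) hz hmax
  · exact hC2.add ((contDiff_norm_sq ℝ).const_smul δ).contDiffOn
  · rw [laplacian_add_smul_norm_sq (hC2.contDiffAt ((isOpen_open_annulus r R).mem_nhds hx))]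
    have := hlap x hx
    positivity
  · obtain ⟨c, hc, hderiv⟩ := hinner x hx
    refine ⟨c + δ * (2 * ‖x‖), by rw [hx]; positivity, ?_⟩
    exact hderiv.add (((hasLineDerivAt_norm_sq_unit x).hasLineDerivWithinAt _).const_smul δ)

lemma le_of_laplacian_nonneg_of_le_outer_sphere (hr : 0 < r)
    (hcont : ContinuousOn u {x | r ≤ ‖x‖ ∧ ‖x‖ ≤ R})
    (hC2 : ContDiffOn ℝ 2 u {x | r < ‖x‖ ∧ ‖x‖ < R})
    (hlap : ∀ x ∈ {x | r < ‖x‖ ∧ ‖x‖ < R}, 0 ≤ Δ u x)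
    (hinner : ∀ x : E, ‖x‖ = r → ∃ c ≥ 0,
      HasLineDerivWithinAt ℝ u c {y | r ≤ ‖y‖ ∧ ‖y‖ < R} x (‖x‖⁻¹ • x))
    {M : ℝ} (houter : ∀ x, ‖x‖ = R → u x ≤ M)
    {x : E} (hx : x ∈ {x | r ≤ ‖x‖ ∧ ‖x‖ ≤ R}) : u x ≤ M := by
  have hR : 0 < R := hr.trans_le (hx.1.trans hx.2)
  refine le_of_forall_pos_le_add fun η hη => ?_
  set δ := η / R ^ 2 with hδ
  have hδpos : 0 < δ := by positivity
  obtain ⟨z, hz, hmax⟩ := (isCompact_closed_annulus r R).exists_isMaxOn ⟨x, hx⟩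
    (hcont.add ((continuous_norm.pow 2).const_smul δ).continuousOn)
  have hzR : ‖z‖ = R := norm_eq_of_isMaxOn_add_smul_norm_sq hδpos hr hC2 hlap hinner hz hmax
  calc u x ≤ u x + δ * ‖x‖ ^ 2 := le_add_of_nonneg_right (by positivity)
    _ ≤ u z + δ * ‖z‖ ^ 2 := hmax hx
    _ ≤ M + δ * ‖z‖ ^ 2 := by gcongr; exact houter z hzR
    _ = M + η := by rw [hzR, hδ]; field_simp

lemma abs_le_of_harmonicOnNhd_of_le_outer_sphere {w : E → ℝ} (hr : 0 < r)
    (hcont : ContinuousOn w {x | r ≤ ‖x‖ ∧ ‖x‖ ≤ R})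
    (hharm : HarmonicOnNhd w {x | r < ‖x‖ ∧ ‖x‖ < R})
    (hneu : ∀ x : E, ‖x‖ = r →
      HasLineDerivWithinAt ℝ w 0 {y | r ≤ ‖y‖ ∧ ‖y‖ < R} x (‖x‖⁻¹ • x))
    {M : ℝ} (houter : ∀ x, ‖x‖ = R → |w x| ≤ M)
    {x : E} (hx : x ∈ {x | r ≤ ‖x‖ ∧ ‖x‖ ≤ R}) : |w x| ≤ M := by
  have hneg : HarmonicOnNhd (-w) {x | r < ‖x‖ ∧ ‖x‖ < R} := hharm.neg
  refine abs_le'.2 ⟨?_, ?_⟩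
  · exact le_of_laplacian_nonneg_of_le_outer_sphere hr hcont hharm.contDiffOn
      (fun y hy => (hharm y hy).2.self_of_nhds.ge) (fun y hy => ⟨0, le_rfl, hneu y hy⟩)
      (fun y hy => (le_abs_self _).trans (houter y hy)) hx
  · exact le_of_laplacian_nonneg_of_le_outer_sphere hr hcont.neg hneg.contDiffOn
      (fun y hy => (hneg y hy).2.self_of_nhds.ge)
      (fun y hy => ⟨0, le_rfl, (hneu y hy).neg.congr_deriv neg_zero⟩)
      (fun y hy => (neg_le_abs _).trans (houter y hy)) hx

theorem insulated_maximum_principle_general [Nontrivial E] (hr : 0 < r) (hrR : r < R) {w : E → ℝ}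
    (hcont : ContinuousOn w {x | r ≤ ‖x‖ ∧ ‖x‖ ≤ R})
    (hharm : HarmonicOnNhd w {x | r < ‖x‖ ∧ ‖x‖ < R})
    (hneu : ∀ x : E, ‖x‖ = r →
      HasLineDerivWithinAt ℝ w 0 {y | r ≤ ‖y‖ ∧ ‖y‖ < R} x (‖x‖⁻¹ • x)) :
    sSup ((fun x => |w x|) '' {x | r ≤ ‖x‖ ∧ ‖x‖ ≤ R})
      = sSup ((fun x => |w x|) '' {x | ‖x‖ = R}) := by
  have hbdd : BddAbove ((fun x => |w x|) '' {x | r ≤ ‖x‖ ∧ ‖x‖ ≤ R}) :=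
    ((isCompact_closed_annulus r R).image_of_continuousOn hcont.abs).bddAbove
  have hsub : {x : E | ‖x‖ = R} ⊆ {x | r ≤ ‖x‖ ∧ ‖x‖ ≤ R} :=
    fun x hx => ⟨hrR.le.trans_eq hx.symm, hx.le⟩
  have hne : {x : E | ‖x‖ = R}.Nonempty := exists_norm_eq E (hr.trans hrR).le
  have houter (x : E) (hx : ‖x‖ = R) : |w x| ≤ sSup ((fun x => |w x|) '' {x | ‖x‖ = R}) :=
    le_csSup (hbdd.mono (image_mono hsub)) ⟨x, hx, rfl⟩
  refine le_antisymm (csSup_le ((hne.mono hsub).image _) ?_)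
    (csSup_le_csSup hbdd (hne.image _) (image_mono hsub))
  rintro _ ⟨x, hx, rfl⟩
  exact abs_le_of_harmonicOnNhd_of_le_outer_sphere hr hcont hharm hneu houter hx

end InnerProductSpace

lemma laplacian_eq {d : ℕ} (f : EuclideanSpace ℝ (Fin d) → ℝ) : laplacian f = Δ f := by
  simp only [laplacian_eq_iteratedFDeriv_orthonormalBasis f (EuclideanSpace.basisFun (Fin d) ℝ),
    EuclideanSpace.basisFun_apply]
  rfl

lemma HarmonicOnSet.harmonicOnNhd {d : ℕ} {f : EuclideanSpace ℝ (Fin d) → ℝ}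
    {U : Set (EuclideanSpace ℝ (Fin d))} (hf : HarmonicOnSet f U) (hU : IsOpen U) :
    HarmonicOnNhd f U := fun x hx =>
  ⟨hf.1.contDiffAt (hU.mem_nhds hx), by
    filter_upwards [hU.mem_nhds hx] with y hy
    rw [← laplacian_eq]
    exact hf.2 y hy⟩

theorem insulated_maximum_principle {d : ℕ} (hd : 2 ≤ d)
    {r₀ ε : ℝ} (hr₀ : 0 < r₀) (hε : 0 < ε)
    (w : EuclideanSpace ℝ (Fin d) → ℝ)
    (hcont : ContinuousOn w {x | r₀ ≤ ‖x‖ ∧ ‖x‖ ≤ r₀ + ε})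
    (hharm : HarmonicOnSet w {x | r₀ < ‖x‖ ∧ ‖x‖ < r₀ + ε})
    (hC1 : ContDiffOn ℝ 1 w {x | r₀ ≤ ‖x‖ ∧ ‖x‖ < r₀ + ε})
    (hneu : ∀ x : EuclideanSpace ℝ (Fin d), ‖x‖ = r₀ →
      fderivWithin ℝ w {y | r₀ ≤ ‖y‖ ∧ ‖y‖ < r₀ + ε} x (‖x‖⁻¹ • x) = 0) :
    sSup ((fun x => |w x|) '' {x | r₀ ≤ ‖x‖ ∧ ‖x‖ ≤ r₀ + ε})
      = sSup ((fun x => |w x|) '' {x | ‖x‖ = r₀ + ε}) := by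
  have : NeZero d := ⟨by lia⟩
  refine insulated_maximum_principle_general hr₀ (lt_add_of_pos_right r₀ hε) hcont
    (hharm.harmonicOnNhd (isOpen_open_annulus _ _)) fun x hx => ?_
  have hdiff := hC1.differentiableOn one_ne_zero x ⟨hx.ge, by linarith⟩
  exact hneu x hx ▸ hdiff.hasFDerivWithinAt.hasLineDerivWithinAt _
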